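/- Let A be a non-zero skew left brace that has a factorization A = B + C through left ideals B and C, where both B and C are trivial as skew left braces. If B is a strong left ideal of A, then B or C contains a non-zero ideal I of A that acts trivially on A, i.e., λ_i = id_A for all i ∈ I. -/

import Mathlib

/-- A skew left brace: `(A,+)` and `(A,∘)` are groups (sharing the same identity `0`)
such that `a ∘ (b + c) = a ∘ b - a + a ∘ c`.  Here `circ` is the operation `∘` and
`cinv a` is the inverse of `a` in `(A,∘)`. -/
class SkewBrace (A : Type*) extends AddGroup A where
  circ : A → A → A
  cinv : A → A
  circ_assoc : ∀ a b c : A, circ (circ a b) c = circ a (circ b c)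
  zero_circ : ∀ a : A, circ 0 a = a
  circ_zero : ∀ a : A, circ a 0 = a
  cinv_circ : ∀ a : A, circ (cinv a) a = 0
  circ_cinv : ∀ a : A, circ a (cinv a) = 0
  compat : ∀ a b c : A, circ a (b + c) = circ a b + -a + circ a c

open SkewBrace

/-- `lam a b = -a + a ∘ b`. -/
def lam {A : Type*} [SkewBrace A] (a b : A) : A := -a + circ a b

/-- The star operation `a * b = lam a b - b = -a + a ∘ b - b`. -/
def bstar {A : Type*} [SkewBrace A] (a b : A) : A := lam a b - b

/-- `X * Y`: the subgroup of `(A,+)` generated by `{x * y : x ∈ X, y ∈ Y}`. -/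
def starSpan {A : Type*} [SkewBrace A] (X Y : Set A) : AddSubgroup A :=
  AddSubgroup.closure {z | ∃ x ∈ X, ∃ y ∈ Y, z = bstar x y}

/-- The right series of `st`: `rseriesOf st 0 = A = A^(1)` and
`rseriesOf st n = A^(n+1)`, so that `A^(n+1) = A^(n) * A`. -/
def rseriesOf {G : Type*} [AddGroup G] (st : G → G → G) : ℕ → AddSubgroup G
  | 0 => ⊤
  | n + 1 => AddSubgroup.closure {z | ∃ u ∈ rseriesOf st n, ∃ a : G, z = st u a}

/-!
Two elements congruent modulo a trivial left ideal act in the same way on it, so the identity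
`b ∘ c = b + λ_b(c)`, with `b ∈ B`, and the normality of `B` show that `λ_b(c)` and `c` act alike
on `B`. With the triviality of `C`, this puts every `b * c = λ_b(c) - c` with `b ∈ B` and `c ∈ C` in
`I = C ∩ ker λ ∩ C_A(B)`, where `C_A(B)` is the additive centralizer, and hence `I` is an ideal.
If `I = 0`, then all these `b * c` vanish, so `B` itself acts trivially; moreover `B ≠ 0`, because
`B = 0` would give `I = C = A`.
-/

namespace SkewBrace

variable {A : Type*} [SkewBrace A]

lemma add_lam (a x : A) : a + lam a x = circ a x := add_neg_cancel_left _ _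

lemma lam_zero_left (x : A) : lam 0 x = x := by
  rw [lam, zero_circ, neg_zero, zero_add]

lemma lam_add (a x y : A) : lam a (x + y) = lam a x + lam a y := by
  simp only [lam, compat, add_assoc]

lemma lam_neg (a x : A) : lam a (-x) = -lam a x :=
  map_neg (AddMonoidHom.mk' (lam a) (lam_add a)) x

lemma lam_circ (a b x : A) : lam (circ a b) x = lam a (lam b x) := by
  have h : lam a (lam b x) = -lam a b + lam a (circ b x) := by
    rw [← lam_neg, ← lam_add, ← lam]
  rw [h]
  simp only [lam, circ_assoc, neg_add_rev, neg_neg, add_assoc, add_neg_cancel_left]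

lemma lam_lam_cinv (a x : A) : lam a (lam (cinv a) x) = x := by
  rw [← lam_circ, circ_cinv, lam_zero_left]

lemma bstar_add_self (a x : A) : bstar a x + x = lam a x := sub_add_cancel _ _

variable (A) in
/-- The kernel of the action `a ↦ λ_a`. It is a subgroup of `(A,∘)`, and also of `(A,+)` because
`a ∘ b = a + b` as soon as `λ_a` is the identity. -/
def kerLam : AddSubgroup A where
  carrier := {a | ∀ x, lam a x = x}
  zero_mem' := lam_zero_left
  add_mem' {a b} ha hb x := by
    have h : a + b = circ a b := by rw [← add_lam, ha]
    rw [h, lam_circ, hb, ha]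
  neg_mem' {a} ha x := by
    have h : circ a (-a) = 0 := by rw [← add_lam, ha, add_neg_cancel]
    rw [← ha (lam (-a) x), ← lam_circ, h, lam_zero_left]

lemma circ_conj_of_mem_kerLam (a : A) {x : A} (hx : x ∈ kerLam A) :
    circ (circ a x) (cinv a) = a + lam a x + -a := by
  rw [circ_assoc, ← add_lam x, hx, compat, circ_cinv, add_zero, add_lam]

/-- A left ideal of `A`: a subgroup of `(A,+)` stable under every `λ_a`. -/
def IsLeftIdeal (I : AddSubgroup A) : Prop := ∀ a : A, ∀ x ∈ I, lam a x ∈ I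

/-- The two operations of `A` agree on `I`; for a left ideal `I`, this says that `I` is trivial as
a skew left brace. -/
def IsTrivial (I : AddSubgroup A) : Prop := ∀ x ∈ I, ∀ y ∈ I, x + y = circ x y

/-- The factorization `A = B + C` of a skew left brace. -/
def IsFactorization (B C : AddSubgroup A) : Prop := ∀ a : A, ∃ b ∈ B, ∃ c ∈ C, a = b + c

variable {I B C : AddSubgroup A} {a b c i x : A}

lemma IsLeftIdeal.circ_conj_mem (hI : IsLeftIdeal I) (hIn : I.Normal) (hker : I ≤ kerLam A) (a : A)
    (hx : x ∈ I) : circ (circ a x) (cinv a) ∈ I := by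
  rw [circ_conj_of_mem_kerLam a (hker hx)]
  exact hIn.conj_mem _ (hI a x hx) a

lemma IsTrivial.lam_eq (hI : IsTrivial I) (ha : a ∈ I) (hx : x ∈ I) : lam a x = x := by
  rw [lam, ← hI a ha x hx, neg_add_cancel_left]

lemma IsTrivial.lam_add_left (hI : IsTrivial I) (ha : a ∈ I) (hb : b ∈ I) (x : A) :
    lam (a + b) x = lam a (lam b x) := by
  rw [hI a ha b hb, lam_circ]

lemma IsTrivial.lam_lam_neg (hI : IsTrivial I) (ha : a ∈ I) (x : A) :
    lam a (lam (-a) x) = x := by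
  rw [← hI.lam_add_left ha (neg_mem ha), add_neg_cancel, lam_zero_left]

lemma IsTrivial.lam_congr (hI : IsLeftIdeal I) (hIt : IsTrivial I) (hab : -a + b ∈ I)
    (hx : x ∈ I) : lam b x = lam a x := by
  have hb : b = circ a (lam (cinv a) (-a + b)) := by
    rw [← add_lam, lam_lam_cinv, add_neg_cancel_left]
  rw [hb, lam_circ, hIt.lam_eq (hI _ _ hab) hx]

lemma IsTrivial.lam_lam_left (hB : IsLeftIdeal B) (hBn : B.Normal) (hBt : IsTrivial B)
    (hb : b ∈ B) (c : A) (hx : x ∈ B) : lam (lam b c) x = lam c x := by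
  have hconj : -lam b c + circ b c ∈ B := by
    simpa only [← add_lam, ← add_assoc, neg_neg] using hBn.conj_mem b hb (-lam b c)
  rw [← hBt.lam_congr hB hconj hx, lam_circ, hBt.lam_eq hb (hB c x hx)]

lemma IsLeftIdeal.bstar_mem (hI : IsLeftIdeal I) (a : A) (hx : x ∈ I) : bstar a x ∈ I :=
  sub_mem (hI a x hx) hx

lemma IsTrivial.bstar_mem_centralizer (hBn : B.Normal) (hBt : IsTrivial B) (hb : b ∈ B) (c : A) :
    bstar b c ∈ AddSubgroup.centralizer (B : Set A) := by
  rw [AddSubgroup.mem_centralizer_iff]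
  intro x hx
  have hconj : -c + x + c ∈ B := by simpa only [neg_neg] using hBn.conj_mem x hx (-c)
  have h : x + lam b c = lam b c + (-c + x + c) := by
    calc x + lam b c = lam b (x + c) := by rw [lam_add, hBt.lam_eq hb hx]
      _ = lam b (c + (-c + x + c)) := by simp only [add_assoc, add_neg_cancel_left]
      _ = lam b c + (-c + x + c) := by rw [lam_add, hBt.lam_eq hb hconj]
  simp only [bstar, sub_eq_add_neg, ← add_assoc x, h]
  simp only [add_assoc, add_neg_cancel, add_zero]

lemma IsFactorization.mem_kerLam (hfact : IsFactorization B C) (haB : ∀ x ∈ B, lam a x = x)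
    (haC : ∀ x ∈ C, lam a x = x) : a ∈ kerLam A := by
  intro x
  obtain ⟨b, hb, c, hc, rfl⟩ := hfact x
  rw [lam_add, haB b hb, haC c hc]

lemma IsFactorization.bstar_mem_kerLam (hfact : IsFactorization B C) (hB : IsLeftIdeal B)
    (hBn : B.Normal) (hBt : IsTrivial B) (hC : IsLeftIdeal C) (hCt : IsTrivial C) (hb : b ∈ B)
    (hc : c ∈ C) : bstar b c ∈ kerLam A := by
  refine hfact.mem_kerLam (fun x hx ↦ ?_) fun x hx ↦ hCt.lam_eq (hC.bstar_mem b hc) hx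
  rw [bstar, sub_eq_add_neg, hCt.lam_add_left (hC b c hc) (neg_mem hc),
    hBt.lam_lam_left hB hBn hb c (hB _ x hx), hCt.lam_lam_neg hc]

/-- The elements of `C` that act trivially on `A` and commute additively with `B`,
the candidate for the ideal contained in `C`. -/
def centralizingKernel (B C : AddSubgroup A) : AddSubgroup A :=
  C ⊓ kerLam A ⊓ AddSubgroup.centralizer (B : Set A)

lemma centralizingKernel_le : centralizingKernel B C ≤ C := inf_le_left.trans inf_le_left

lemma centralizingKernel_le_kerLam : centralizingKernel B C ≤ kerLam A :=
  inf_le_left.trans inf_le_right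

lemma IsFactorization.bstar_mem_centralizingKernel (hfact : IsFactorization B C)
    (hB : IsLeftIdeal B) (hBn : B.Normal) (hBt : IsTrivial B) (hC : IsLeftIdeal C)
    (hCt : IsTrivial C) (hb : b ∈ B) (hc : c ∈ C) :
    bstar b c ∈ centralizingKernel B C :=
  ⟨⟨hC.bstar_mem b hc, hfact.bstar_mem_kerLam hB hBn hBt hC hCt hb hc⟩,
    hBt.bstar_mem_centralizer hBn hb c⟩

lemma IsFactorization.isLeftIdeal_centralizingKernel (hfact : IsFactorization B C)
    (hB : IsLeftIdeal B) (hBn : B.Normal) (hBt : IsTrivial B) (hC : IsLeftIdeal C)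
    (hCt : IsTrivial C) : IsLeftIdeal (centralizingKernel B C) := by
  intro a i hi
  obtain ⟨b, hb, c, hc, rfl⟩ := hfact a
  have hiC : i ∈ C := centralizingKernel_le hi
  have hlam : lam (b + c) i = lam b i :=
    hCt.lam_congr hC (by rwa [neg_add_cancel_left]) hiC
  rw [hlam, ← bstar_add_self]
  exact add_mem (hfact.bstar_mem_centralizingKernel hB hBn hBt hC hCt hb hiC) hi

lemma IsTrivial.conj_mem_centralizingKernel (hBn : B.Normal) (hCt : IsTrivial C)
    (hc : c ∈ C) (hi : i ∈ centralizingKernel B C) : c + i + -c ∈ centralizingKernel B C := by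
  obtain ⟨⟨hiC, hiker⟩, hicent⟩ := hi
  have hciC : c + i ∈ C := add_mem hc hiC
  have hncC : -c ∈ C := neg_mem hc
  have hker : c + i + -c ∈ kerLam A := by
    intro x
    rw [hCt.lam_add_left hciC hncC, hCt.lam_add_left hc hiC, hiker, hCt.lam_lam_neg hc]
  exact ⟨⟨add_mem hciC hncC, hker⟩, AddSubgroup.normal_centralizer.conj_mem i hicent c⟩

lemma IsFactorization.normal_centralizingKernel (hfact : IsFactorization B C) (hBn : B.Normal)
    (hCt : IsTrivial C) : (centralizingKernel B C).Normal := by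
  constructor
  intro i hi a
  obtain ⟨b, hb, c, hc, rfl⟩ := hfact a
  have hconj := hCt.conj_mem_centralizingKernel hBn hc hi
  have hcomm : b + (c + i + -c) = c + i + -c + b :=
    AddSubgroup.mem_centralizer_iff.mp hconj.2 b hb
  have h : b + c + i + -(b + c) = c + i + -c := by
    calc b + c + i + -(b + c) = b + (c + i + -c) + -b := by simp only [neg_add_rev, add_assoc]
      _ = c + i + -c := by rw [hcomm, add_neg_cancel_right]
  rwa [h]

lemma IsFactorization.le_kerLam_of_centralizingKernel_eq_bot (hfact : IsFactorization B C)
    (hB : IsLeftIdeal B) (hBn : B.Normal) (hBt : IsTrivial B) (hC : IsLeftIdeal C)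
    (hCt : IsTrivial C) (h : centralizingKernel B C = ⊥) : B ≤ kerLam A := by
  refine fun b hb ↦ hfact.mem_kerLam (fun x hx ↦ hBt.lam_eq hb hx) fun c hc ↦ ?_
  have hstar := hfact.bstar_mem_centralizingKernel hB hBn hBt hC hCt hb hc
  rwa [h, AddSubgroup.mem_bot, bstar, sub_eq_zero] at hstar

lemma IsFactorization.centralizingKernel_bot_left (hfact : IsFactorization ⊥ C)
    (hCt : IsTrivial C) : centralizingKernel ⊥ C = ⊤ := by
  have hC (a : A) : a ∈ C := by
    obtain ⟨b, hb, c, hc, rfl⟩ := hfact a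
    rwa [AddSubgroup.mem_bot.mp hb, zero_add]
  refine (AddSubgroup.eq_top_iff' _).mpr fun a ↦ ⟨⟨hC a, fun x ↦ hCt.lam_eq (hC a) (hC x)⟩,
    AddSubgroup.mem_centralizer_iff.mpr fun x hx ↦ ?_⟩
  rw [AddSubgroup.mem_bot.mp hx, zero_add, add_zero]

lemma IsFactorization.ne_bot_of_centralizingKernel_eq_bot [Nontrivial A]
    (hfact : IsFactorization B C) (hCt : IsTrivial C) (h : centralizingKernel B C = ⊥) :
    B ≠ ⊥ := by
  rintro rfl
  exact bot_ne_top (h.symm.trans (hfact.centralizingKernel_bot_left hCt))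

end SkewBrace

/-- if a non-zero skew brace `A = B + C` factorizes through left ideals
trivial as skew braces and `B` is a strong left ideal, then `B` or `C` contains a
non-zero ideal `I` of `A` acting trivially on `A` (`lam i = id` for all `i ∈ I`). -/
theorem stmt11 {A : Type*} [SkewBrace A] [Nontrivial A] (B C : AddSubgroup A)
    (hB : ∀ a : A, ∀ x ∈ B, lam a x ∈ B)
    (hC : ∀ a : A, ∀ x ∈ C, lam a x ∈ C)
    (hBn : B.Normal)
    (hBtriv : ∀ x ∈ B, ∀ y ∈ B, x + y = circ x y)
    (hCtriv : ∀ x ∈ C, ∀ y ∈ C, x + y = circ x y)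
    (hfact : ∀ a : A, ∃ b ∈ B, ∃ c ∈ C, a = b + c) :
    ∃ I : AddSubgroup A,
      (∀ a : A, ∀ x ∈ I, lam a x ∈ I) ∧
      I.Normal ∧
      (∀ a : A, ∀ x ∈ I, circ (circ a x) (cinv a) ∈ I) ∧
      I ≠ ⊥ ∧
      (∀ i ∈ I, ∀ x : A, lam i x = x) ∧
      ((I : Set A) ⊆ (B : Set A) ∨ (I : Set A) ⊆ (C : Set A)) := by
  have hfact : IsFactorization B C := hfact
  by_cases h : centralizingKernel B C = ⊥
  · have hker : B ≤ kerLam A :=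
      hfact.le_kerLam_of_centralizingKernel_eq_bot hB hBn hBtriv hC hCtriv h
    exact ⟨B, hB, hBn, fun a x hx ↦ IsLeftIdeal.circ_conj_mem hB hBn hker a hx,
      hfact.ne_bot_of_centralizingKernel_eq_bot hCtriv h, hker, Or.inl subset_rfl⟩
  · have hI : IsLeftIdeal (centralizingKernel B C) :=
      hfact.isLeftIdeal_centralizingKernel hB hBn hBtriv hC hCtriv
    have hIn : (centralizingKernel B C).Normal := hfact.normal_centralizingKernel hBn hCtriv
    exact ⟨centralizingKernel B C, hI, hIn,
      fun a x hx ↦ hI.circ_conj_mem hIn centralizingKernel_le_kerLam a hx,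
      h, centralizingKernel_le_kerLam, Or.inr centralizingKernel_le⟩
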